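/- Let C be a natural number, let α be a real number with 0 ≤ α < 1, and let T_c : Fin C → ℕ with total T = ∑_{c} T_c satisfying T ≥ 1. Then ∑_{c} √( (T_c)^{α+1} · log T_c ) ≤ √( C · T^{α+1} · log T ), where log is the natural logarithm (with log 0 = 0 by convention), naturals are coerced to reals, and powers are real powers. -/

import Mathlib

open Finset

section

open scoped Real

variable {ι : Type*} {s : Finset ι}

theorem sum_rpow_le_rpow_sum {x : ι → ℝ} {p : ℝ} (hp : 1 ≤ p) (hx : ∀ i ∈ s, 0 ≤ x i) :
    ∑ i ∈ s, x i ^ p ≤ (∑ i ∈ s, x i) ^ p := by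
  induction s using Finset.cons_induction with
  | empty => simp [Real.zero_rpow (by linarith : p ≠ 0)]
  | cons a s ha ih =>
    rw [forall_mem_cons] at hx
    rw [sum_cons, sum_cons]
    calc x a ^ p + ∑ i ∈ s, x i ^ p
        ≤ x a ^ p + (∑ i ∈ s, x i) ^ p := by gcongr; exact ih hx.2
      _ ≤ (x a + ∑ i ∈ s, x i) ^ p := Real.add_rpow_le_rpow_add hx.1 (sum_nonneg hx.2) hp

theorem sum_sqrt_le_sqrt_card_mul_sum {a : ι → ℝ} (ha : ∀ i ∈ s, 0 ≤ a i) :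
    ∑ i ∈ s, √(a i) ≤ √(#s * ∑ i ∈ s, a i) := by
  apply Real.le_sqrt_of_sq_le
  calc (∑ i ∈ s, √(a i)) ^ 2
      ≤ #s * ∑ i ∈ s, √(a i) ^ 2 := sq_sum_le_card_mul_sum_sq
    _ = #s * ∑ i ∈ s, a i := by rw [sum_congr rfl fun i hi => Real.sq_sqrt (ha i hi)]

/-- `log⁺` agrees with `log` on `ℕ` (because `log 0 = 0`) but, unlike `log`, is nonnegative and
monotone on all of `[0, ∞)`. -/
theorem sum_sqrt_rpow_mul_log_le_general {x : ι → ℝ} {p : ℝ} (hp : 1 ≤ p)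
    (hx : ∀ i ∈ s, 0 ≤ x i) :
    ∑ i ∈ s, √(x i ^ p * log⁺ (x i)) ≤
      √(#s * (∑ i ∈ s, x i) ^ p * log⁺ (∑ i ∈ s, x i)) := by
  set X := ∑ i ∈ s, x i
  have rpow_nonneg (i) (hi : i ∈ s) : 0 ≤ x i ^ p := Real.rpow_nonneg (hx i hi) p
  have posLog_le (i) (hi : i ∈ s) : log⁺ (x i) ≤ log⁺ X :=
    Real.posLog_le_posLog (hx i hi) (single_le_sum hx hi)
  have posLog_nonneg : 0 ≤ log⁺ X := Real.posLog_nonneg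
  calc ∑ i ∈ s, √(x i ^ p * log⁺ (x i))
      ≤ √(#s * ∑ i ∈ s, x i ^ p * log⁺ (x i)) :=
        sum_sqrt_le_sqrt_card_mul_sum fun i hi =>
          mul_nonneg (rpow_nonneg i hi) Real.posLog_nonneg
    _ ≤ √(#s * ∑ i ∈ s, x i ^ p * log⁺ X) := by
        gcongr √(#s * ∑ i ∈ s, ?_) with i hi
        exact mul_le_mul_of_nonneg_left (posLog_le i hi) (rpow_nonneg i hi)
    _ = √(#s * (∑ i ∈ s, x i ^ p) * log⁺ X) := by rw [← sum_mul, mul_assoc]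
    _ ≤ √(#s * X ^ p * log⁺ X) := by
        gcongr
        exact sum_rpow_le_rpow_sum hp hx

end

/-- Core analytic bound in Lemma 2 (Bandit-BO):
`∑_c √(T_c^{α+1} · log T_c) ≤ √(C · T^{α+1} · log T)` when `T = ∑_c T_c ≥ 1`. -/
theorem sum_sqrt_rpow_mul_log_le (C : ℕ) (α : ℝ) (hα0 : 0 ≤ α) (hα1 : α < 1)
    (Tc : Fin C → ℕ) (T : ℕ) (hT : T = ∑ c, Tc c) (hT1 : 1 ≤ T) :
    ∑ c, Real.sqrt ((Tc c : ℝ) ^ (α + 1) * Real.log (Tc c))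
      ≤ Real.sqrt ((C : ℝ) * (T : ℝ) ^ (α + 1) * Real.log T) := by
  simpa [Real.log_of_nat_eq_posLog, hT, ← Nat.cast_sum] using
    sum_sqrt_rpow_mul_log_le_general (s := univ) (x := fun c => (Tc c : ℝ))
      (le_add_of_nonneg_left hα0) fun c _ => (Tc c).cast_nonneg
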